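/- arXiv:1810.08411 — 2 statements merged into one kernel-verified Lean document; each statement's English description precedes it below -/
import Mathlib

section
/- For every integer t with t ≥ 89, the polynomial f_t^{(6)}(x) = x^6 − 2t x^5 − (5t+15) x^4 − 20 x^3 + 5t x^2 + (2t+6) x + 1 has six distinct real roots α_1, …, α_6, and these roots satisfy min_{i≠j} |α_i − α_j| > 0.4986 and min_i ∏_{j≠i} |α_j − α_i| > 101.83. -/
/-!
As `t → ∞`, `f_t(x) / t` tends to `-x (x - 1) (x + 1) (x + 2) (2 x + 1)`, so five roots lie near
`-2, -1, -1/2, 0, 1` and the sixth is close to `2 t`. The first-order corrections in `1 / t` have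
the form `c / (a t + b)`, and a sign change of `f_t` between two such points with slightly different
`b` encloses each root (`exists_root_between`). The signs are read off from the homogeneous form
`F_t(p, q)`, which at these points is a polynomial in `t - 89` whose coefficients all have the
same sign.

With these enclosures, all pairwise distances and all products are bounded below with room to
spare, except at the root `r₃` near `-1/2`. There `(r₃ - r₁) (r₅ - r₃) ≥ 9/4` and
`(r₃ - r₂) (r₄ - r₃) ≥ 1/4`, while `r₆ - r₃ > 2 t + 3`; so the product exceeds `(9/16) (2 t + 3)`,
which suffices for `t ≥ 90`. This bound falls just short of `101.83` at `t = 89`, where the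
enclosures are evaluated numerically instead.
-/

/-- The polynomial `f_t^{(6)}`, for a real parameter `t`. -/
def sexticPoly (t x : ℝ) : ℝ :=
  x ^ 6 - 2 * t * x ^ 5 - (5 * t + 15) * x ^ 4 - 20 * x ^ 3 + 5 * t * x ^ 2 + (2 * t + 6) * x + 1

/-- The binary form `F_t^{(6)}`, the homogenization of `sexticPoly`. -/
def sexticForm (t p q : ℝ) : ℝ :=
  p ^ 6 - 2 * t * p ^ 5 * q - (5 * t + 15) * p ^ 4 * q ^ 2 - 20 * p ^ 3 * q ^ 3
    + 5 * t * p ^ 2 * q ^ 4 + (2 * t + 6) * p * q ^ 5 + q ^ 6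

lemma sexticPoly_div (t p q : ℝ) (hq : 0 < q) :
    sexticPoly t (p / q) = sexticForm t p q / q ^ 6 := by
  unfold sexticPoly sexticForm
  field_simp

lemma continuous_sexticPoly (t : ℝ) : Continuous (sexticPoly t) := by
  unfold sexticPoly
  fun_prop

/-- A sign change of the binary form between `p / q` and `p' / q'` encloses a root. -/
lemma exists_root_between (t p q p' q' : ℝ) (hq : 0 < q) (hq' : 0 < q')
    (hle : p / q ≤ p' / q')
    (h : (0 < sexticForm t p q ∧ 0 < -sexticForm t p' q') ∨
      (0 < -sexticForm t p q ∧ 0 < sexticForm t p' q')) :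
    ∃ x, sexticPoly t x = 0 ∧ p / q < x ∧ x < p' / q' := by
  have hc := (continuous_sexticPoly t).continuousOn (s := Set.Icc (p / q) (p' / q'))
  have h6 : 0 < q ^ 6 := by positivity
  have h6' : 0 < q' ^ 6 := by positivity
  rcases h with ⟨h1, h2⟩ | ⟨h1, h2⟩
  · have ha : 0 < sexticPoly t (p / q) := by
      rw [sexticPoly_div t p q hq]; exact div_pos h1 h6
    have hb : sexticPoly t (p' / q') < 0 := by
      rw [sexticPoly_div t p' q' hq']; exact div_neg_of_neg_of_pos (by linarith) h6'
    obtain ⟨x, hx, hx0⟩ := intermediate_value_Ioo' hle hc ⟨hb, ha⟩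
    exact ⟨x, hx0, hx.1, hx.2⟩
  · have ha : sexticPoly t (p / q) < 0 := by
      rw [sexticPoly_div t p q hq]; exact div_neg_of_neg_of_pos (by linarith) h6
    have hb : 0 < sexticPoly t (p' / q') := by
      rw [sexticPoly_div t p' q' hq']; exact div_pos h2 h6'
    obtain ⟨x, hx, hx0⟩ := intermediate_value_Ioo hle hc ⟨ha, hb⟩
    exact ⟨x, hx0, hx.1, hx.2⟩

lemma exists_root_near_neg_two (t : ℝ) (ht : 89 ≤ t) : ∃ x, sexticPoly t x = 0 ∧
    -2 - 3 / (2 * t + 1.5) < x ∧ x < -2 - 3 / (2 * t + 1.6) := by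
  obtain ⟨u, rfl⟩ : ∃ u, t = 89 + u := ⟨t - 89, by ring⟩
  have hu : 0 ≤ u := by linarith
  have e1 : -2 - 3 / (2 * (89 + u) + 1.5) = (-2 * (4 * u + 359) - 6) / (4 * u + 359) := by
    field_simp; ring
  have e2 : -2 - 3 / (2 * (89 + u) + 1.6) = (-2 * (10 * u + 898) - 15) / (10 * u + 898) := by
    field_simp; ring
  rw [e1, e2]
  refine exists_root_between _ _ _ _ _ (by positivity) (by positivity) ?_ ?_
  · rw [div_le_div_iff₀ (by positivity) (by positivity)]; nlinarith
  · unfold sexticForm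
    refine Or.inl ⟨?_, ?_⟩ <;> ring_nf <;> positivity

lemma exists_root_near_neg_one (t : ℝ) (ht : 89 ≤ t) : ∃ x, sexticPoly t x = 0 ∧
    -1 - 1 / (2 * t + 2.5) < x ∧ x < -1 - 1 / (2 * t + 2.6) := by
  obtain ⟨u, rfl⟩ : ∃ u, t = 89 + u := ⟨t - 89, by ring⟩
  have hu : 0 ≤ u := by linarith
  have e1 : -1 - 1 / (2 * (89 + u) + 2.5) = (-(4 * u + 361) - 2) / (4 * u + 361) := by
    field_simp; ring
  have e2 : -1 - 1 / (2 * (89 + u) + 2.6) = (-(10 * u + 903) - 5) / (10 * u + 903) := by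
    field_simp; ring
  rw [e1, e2]
  refine exists_root_between _ _ _ _ _ (by positivity) (by positivity) ?_ ?_
  · rw [div_le_div_iff₀ (by positivity) (by positivity)]; nlinarith
  · unfold sexticForm
    refine Or.inr ⟨?_, ?_⟩ <;> ring_nf <;> positivity

lemma exists_root_near_neg_half (t : ℝ) (ht : 89 ≤ t) : ∃ x, sexticPoly t x = 0 ∧
    -1 / 2 - 3 / (8 * t + 12) < x ∧ x < -1 / 2 - 3 / (8 * t + 12.3) := by
  obtain ⟨u, rfl⟩ : ∃ u, t = 89 + u := ⟨t - 89, by ring⟩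
  have hu : 0 ≤ u := by linarith
  have e1 : -1 / 2 - 3 / (8 * (89 + u) + 12) = (-(4 * u + 362) - 3) / (8 * u + 724) := by
    field_simp; ring
  have e2 : -1 / 2 - 3 / (8 * (89 + u) + 12.3)
      = (-(80 * u + 7243) - 60) / (160 * u + 14486) := by
    field_simp; ring
  rw [e1, e2]
  refine exists_root_between _ _ _ _ _ (by positivity) (by positivity) ?_ ?_
  · rw [div_le_div_iff₀ (by positivity) (by positivity)]; nlinarith
  · unfold sexticForm
    refine Or.inl ⟨?_, ?_⟩ <;> ring_nf <;> positivity

lemma exists_root_near_zero (t : ℝ) (ht : 89 ≤ t) : ∃ x, sexticPoly t x = 0 ∧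
    -(1 / (2 * t + 3.5)) < x ∧ x < -(1 / (2 * t + 3.6)) := by
  obtain ⟨u, rfl⟩ : ∃ u, t = 89 + u := ⟨t - 89, by ring⟩
  have hu : 0 ≤ u := by linarith
  have e1 : -(1 / (2 * (89 + u) + 3.5)) = (-2) / (4 * u + 363) := by
    field_simp; ring
  have e2 : -(1 / (2 * (89 + u) + 3.6)) = (-5) / (10 * u + 908) := by
    field_simp; ring
  rw [e1, e2]
  refine exists_root_between _ _ _ _ _ (by positivity) (by positivity) ?_ ?_
  · rw [div_le_div_iff₀ (by positivity) (by positivity)]; nlinarith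
  · unfold sexticForm
    refine Or.inr ⟨?_, ?_⟩ <;> ring_nf <;> positivity

lemma exists_root_near_one (t : ℝ) (ht : 89 ≤ t) : ∃ x, sexticPoly t x = 0 ∧
    1 - 3 / (2 * t + 4.5) < x ∧ x < 1 - 3 / (2 * t + 4.6) := by
  obtain ⟨u, rfl⟩ : ∃ u, t = 89 + u := ⟨t - 89, by ring⟩
  have hu : 0 ≤ u := by linarith
  have e1 : 1 - 3 / (2 * (89 + u) + 4.5) = (4 * u + 365 - 6) / (4 * u + 365) := by
    field_simp; ring
  have e2 : 1 - 3 / (2 * (89 + u) + 4.6) = (10 * u + 913 - 15) / (10 * u + 913) := by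
    field_simp; ring
  rw [e1, e2]
  refine exists_root_between _ _ _ _ _ (by positivity) (by positivity) ?_ ?_
  · rw [div_le_div_iff₀ (by positivity) (by positivity)]; nlinarith
  · unfold sexticForm
    refine Or.inl ⟨?_, ?_⟩ <;> ring_nf <;> positivity

lemma exists_root_near_two_mul (t : ℝ) (ht : 89 ≤ t) : ∃ x, sexticPoly t x = 0 ∧
    2 * t + 2.5 < x ∧ x < 2 * t + 2.6 := by
  obtain ⟨u, rfl⟩ : ∃ u, t = 89 + u := ⟨t - 89, by ring⟩
  have hu : 0 ≤ u := by linarith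
  have e1 : 2 * (89 + u) + 2.5 = (4 * u + 361) / 2 := by ring
  have e2 : 2 * (89 + u) + 2.6 = (10 * u + 903) / 5 := by ring
  rw [e1, e2]
  refine exists_root_between _ _ _ _ _ (by positivity) (by positivity) ?_ ?_
  · rw [div_le_div_iff₀ (by positivity) (by positivity)]; nlinarith
  · unfold sexticForm
    refine Or.inr ⟨?_, ?_⟩ <;> ring_nf <;> positivity

/-- The gap between the roots near `-1/2` and `0`, the smallest of all gaps. -/
lemma gap_near_neg_half_zero (t : ℝ) (ht : 89 ≤ t) :
    0.4986 < 1 / 2 + 3 / (8 * t + 12.3) - 1 / (2 * t + 3.5) := by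
  obtain ⟨u, rfl⟩ : ∃ u, t = 89 + u := ⟨t - 89, by ring⟩
  have hu : 0 ≤ u := by linarith
  rw [← sub_pos]
  field_simp
  ring_nf
  positivity

/-- Lower bound for `(r₃ - r₁) (r₅ - r₃)` from the enclosures of the roots. -/
lemma outer_product_bound (t : ℝ) (ht : 89 ≤ t) :
    2.25 ≤ (3 / 2 + 3 / (2 * t + 1.6) - 3 / (8 * t + 12)) *
      (3 / 2 - 3 / (2 * t + 4.5) + 3 / (8 * t + 12.3)) := by
  obtain ⟨u, rfl⟩ : ∃ u, t = 89 + u := ⟨t - 89, by ring⟩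
  have hu : 0 ≤ u := by linarith
  rw [← sub_nonneg]
  field_simp
  ring_nf
  positivity

/-- Lower bound for `(r₃ - r₂) (r₄ - r₃)` from the enclosures of the roots. -/
lemma inner_product_bound (t : ℝ) (ht : 89 ≤ t) :
    0.25 ≤ (1 / 2 + 1 / (2 * t + 2.6) - 3 / (8 * t + 12)) *
      (1 / 2 - 1 / (2 * t + 3.5) + 3 / (8 * t + 12.3)) := by
  obtain ⟨u, rfl⟩ : ∃ u, t = 89 + u := ⟨t - 89, by ring⟩
  have hu : 0 ≤ u := by linarith
  rw [← sub_nonneg]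
  field_simp
  ring_nf
  positivity

/-- The product of the five enclosure bounds for the distances from `r₃`. The distance to `r₆` is
bounded by `2 t + 3 + 3 / (8 t + 12.3)`; dropping its last term is affordable only for `t ≥ 90`. -/
lemma product_bound_near_neg_half (t : ℤ) (ht : 89 ≤ t) :
    101.83 < (3 / 2 + 3 / (2 * (t : ℝ) + 1.6) - 3 / (8 * (t : ℝ) + 12)) *
      (1 / 2 + 1 / (2 * (t : ℝ) + 2.6) - 3 / (8 * (t : ℝ) + 12)) *
      (1 / 2 - 1 / (2 * (t : ℝ) + 3.5) + 3 / (8 * (t : ℝ) + 12.3)) *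
      (3 / 2 - 3 / (2 * (t : ℝ) + 4.5) + 3 / (8 * (t : ℝ) + 12.3)) *
      (2 * (t : ℝ) + 3 + 3 / (8 * (t : ℝ) + 12.3)) := by
  rcases ht.eq_or_lt with rfl | h90
  · norm_num
  · have h90' : (90 : ℝ) ≤ t := by exact_mod_cast h90
    have h1 := outer_product_bound t (by linarith)
    have h2 := inner_product_bound t (by linarith)
    have h3 : 0 ≤ 3 / (8 * (t : ℝ) + 12.3) := by positivity
    set A := 3 / 2 + 3 / (2 * (t : ℝ) + 1.6) - 3 / (8 * (t : ℝ) + 12)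
    set B := 1 / 2 + 1 / (2 * (t : ℝ) + 2.6) - 3 / (8 * (t : ℝ) + 12)
    set C := 1 / 2 - 1 / (2 * (t : ℝ) + 3.5) + 3 / (8 * (t : ℝ) + 12.3)
    set D := 3 / 2 - 3 / (2 * (t : ℝ) + 4.5) + 3 / (8 * (t : ℝ) + 12.3)
    set E := 2 * (t : ℝ) + 3 + 3 / (8 * (t : ℝ) + 12.3)
    have hE : 183 ≤ E := by simp only [E]; linarith
    calc (101.83 : ℝ) < 2.25 * 0.25 * 183 := by norm_num
      _ ≤ (A * D) * (B * C) * E := by gcongr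
      _ = A * B * C * D * E := by ring

/-- A product of five factors is bounded below by the product of lower bounds. -/
lemma lt_prod_five {c a₁ a₂ a₃ a₄ a₅ x₁ x₂ x₃ x₄ x₅ : ℝ} (hc : c < a₁ * a₂ * a₃ * a₄ * a₅)
    (h₁ : 0 ≤ a₁) (h₂ : 0 ≤ a₂) (h₃ : 0 ≤ a₃) (h₄ : 0 ≤ a₄) (h₅ : 0 ≤ a₅)
    (k₁ : a₁ ≤ x₁) (k₂ : a₂ ≤ x₂) (k₃ : a₃ ≤ x₃) (k₄ : a₄ ≤ x₄) (k₅ : a₅ ≤ x₅) :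
    c < x₁ * (x₂ * (x₃ * (x₄ * x₅))) := by
  calc c < a₁ * a₂ * a₃ * a₄ * a₅ := hc
    _ = a₁ * (a₂ * (a₃ * (a₄ * a₅))) := by ring
    _ ≤ x₁ * (x₂ * (x₃ * (x₄ * x₅))) := by gcongr <;> linarith

/-- If consecutive entries of an increasing sextuple are more than `c` apart, so are any two. -/
lemma lt_abs_sub_of_consecutive {c r₁ r₂ r₃ r₄ r₅ r₆ : ℝ} (hc : 0 ≤ c)
    (h₁ : c < r₂ - r₁) (h₂ : c < r₃ - r₂) (h₃ : c < r₄ - r₃) (h₄ : c < r₅ - r₄)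
    (h₅ : c < r₆ - r₅) (i j : Fin 6) (hij : i ≠ j) :
    c < |![r₁, r₂, r₃, r₄, r₅, r₆] i - ![r₁, r₂, r₃, r₄, r₅, r₆] j| := by
  rw [lt_abs]
  fin_cases i <;> fin_cases j <;>
    first
    | exact absurd rfl hij
    | (left; simp; linarith)
    | (right; simp; linarith)

set_option maxHeartbeats 1000000 in
/-- For `t ≥ 89`, the simplest sextic polynomial
`f_t^{(6)}(x) = x^6 - 2t x^5 - (5t+15) x^4 - 20 x^3 + 5t x^2 + (2t+6) x + 1` has six distinct
real roots, whose minimal mutual distance exceeds `0.4986` and such that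
`min_i ∏_{j ≠ i} |α_j - α_i| > 101.83`. -/
theorem simplest_sextic_roots_large_t (t : ℤ) (ht : 89 ≤ t) :
    ∃ α : Fin 6 → ℝ, Function.Injective α ∧
      (∀ i, (α i) ^ 6 - 2 * (t : ℝ) * (α i) ^ 5 - (5 * (t : ℝ) + 15) * (α i) ^ 4
          - 20 * (α i) ^ 3 + 5 * (t : ℝ) * (α i) ^ 2 + (2 * (t : ℝ) + 6) * (α i) + 1 = 0) ∧
      (∀ i j, i ≠ j → 0.4986 < |α i - α j|) ∧
      (∀ i, 101.83 < ∏ j ∈ Finset.univ.erase i, |α j - α i|) := by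
  have htR : (89 : ℝ) ≤ t := by exact_mod_cast ht
  obtain ⟨r₁, f₁, l₁, u₁⟩ := exists_root_near_neg_two t htR
  obtain ⟨r₂, f₂, l₂, u₂⟩ := exists_root_near_neg_one t htR
  obtain ⟨r₃, f₃, l₃, u₃⟩ := exists_root_near_neg_half t htR
  obtain ⟨r₄, f₄, l₄, u₄⟩ := exists_root_near_zero t htR
  obtain ⟨r₅, f₅, l₅, u₅⟩ := exists_root_near_one t htR
  obtain ⟨r₆, f₆, l₆, u₆⟩ := exists_root_near_two_mul t htR
  have hgap := gap_near_neg_half_zero t htR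
  -- Explicit bounds on the corrections, enough for everything except the root near `-1/2`.
  have p1 : 3 / (2 * (t : ℝ) + 1.5) ≤ 0.02 := by
    rw [div_le_iff₀ (by linarith)]; linarith
  have p1' : 0 < 3 / (2 * (t : ℝ) + 1.6) := by positivity
  have p2 : 1 / (2 * (t : ℝ) + 2.5) ≤ 0.006 := by
    rw [div_le_iff₀ (by linarith)]; linarith
  have p2' : 3 / (8 * (t : ℝ) + 12) < 1 / (2 * (t : ℝ) + 2.6) := by
    rw [div_lt_div_iff₀ (by linarith) (by linarith)]; linarith
  have p3 : 3 / (8 * (t : ℝ) + 12) ≤ 0.005 := by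
    rw [div_le_iff₀ (by linarith)]; linarith
  have p3' : 0 < 3 / (8 * (t : ℝ) + 12.3) := by positivity
  have p4 : 1 / (2 * (t : ℝ) + 3.5) ≤ 0.006 := by
    rw [div_le_iff₀ (by linarith)]; linarith
  have p4' : 0 < 1 / (2 * (t : ℝ) + 3.6) := by positivity
  have p5 : 3 / (2 * (t : ℝ) + 4.5) ≤ 0.02 := by
    rw [div_le_iff₀ (by linarith)]; linarith
  have p5' : 0 < 3 / (2 * (t : ℝ) + 4.6) := by positivity
  have g12 : 0.98 ≤ r₂ - r₁ := by linarith
  have g23 : 1 / 2 < r₃ - r₂ := by linarith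
  have g34 : 0.4986 < r₄ - r₃ := by linarith
  have g45 : 0.97 ≤ r₅ - r₄ := by linarith
  have g56 : 179 ≤ r₆ - r₅ := by linarith
  have hdist := lt_abs_sub_of_consecutive (c := 0.4986) (r₁ := r₁) (r₂ := r₂) (r₃ := r₃)
    (r₄ := r₄) (r₅ := r₅) (r₆ := r₆) (by norm_num) (by linarith) (by linarith) g34
    (by linarith) (by linarith)
  refine ⟨![r₁, r₂, r₃, r₄, r₅, r₆], ?_, ?_, hdist, ?_⟩
  · intro i j hij
    by_contra hne
    have := hdist i j hne
    rw [hij, sub_self, abs_zero] at this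
    norm_num at this
  · intro i
    fin_cases i
    exacts [f₁, f₂, f₃, f₄, f₅, f₆]
  · intro i
    have q12 := le_abs_self (r₂ - r₁)
    have q13 := le_abs_self (r₃ - r₁)
    have q14 := le_abs_self (r₄ - r₁)
    have q15 := le_abs_self (r₅ - r₁)
    have q16 := le_abs_self (r₆ - r₁)
    have q23 := le_abs_self (r₃ - r₂)
    have q24 := le_abs_self (r₄ - r₂)
    have q25 := le_abs_self (r₅ - r₂)
    have q26 := le_abs_self (r₆ - r₂)
    have q34 := le_abs_self (r₄ - r₃)
    have q35 := le_abs_self (r₅ - r₃)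
    have q36 := le_abs_self (r₆ - r₃)
    have q45 := le_abs_self (r₅ - r₄)
    have q46 := le_abs_self (r₆ - r₄)
    have q56 := le_abs_self (r₆ - r₅)
    fin_cases i
    · have e : (Finset.univ.erase (0 : Fin 6)) = {1, 2, 3, 4, 5} := by decide
      change _ < ∏ j ∈ Finset.univ.erase (0 : Fin 6), _
      rw [e]
      suffices 101.83 < |r₂ - r₁| * (|r₃ - r₁| * (|r₄ - r₁| * (|r₅ - r₁| * |r₆ - r₁|))) by
        simpa using this
      apply lt_prod_five (a₁ := 0.98) (a₂ := 1.4) (a₃ := 1.9) (a₄ := 2.8) (a₅ := 180) <;>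
        linarith
    · have e : (Finset.univ.erase (1 : Fin 6)) = {0, 2, 3, 4, 5} := by decide
      change _ < ∏ j ∈ Finset.univ.erase (1 : Fin 6), _
      rw [e]
      suffices 101.83 < |r₂ - r₁| * (|r₃ - r₂| * (|r₄ - r₂| * (|r₅ - r₂| * |r₆ - r₂|))) by
        simpa [abs_sub_comm r₁ r₂] using this
      apply lt_prod_five (a₁ := 0.98) (a₂ := 0.5) (a₃ := 0.99) (a₄ := 1.9) (a₅ := 180) <;>
        linarith
    · have e : (Finset.univ.erase (2 : Fin 6)) = {0, 1, 3, 4, 5} := by decide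
      change _ < ∏ j ∈ Finset.univ.erase (2 : Fin 6), _
      rw [e]
      suffices 101.83 < |r₃ - r₁| * (|r₃ - r₂| * (|r₄ - r₃| * (|r₅ - r₃| * |r₆ - r₃|))) by
        simpa [abs_sub_comm r₁ r₃, abs_sub_comm r₂ r₃] using this
      apply lt_prod_five (product_bound_near_neg_half t ht) <;> linarith
    · have e : (Finset.univ.erase (3 : Fin 6)) = {0, 1, 2, 4, 5} := by decide
      change _ < ∏ j ∈ Finset.univ.erase (3 : Fin 6), _
      rw [e]
      suffices 101.83 < |r₄ - r₁| * (|r₄ - r₂| * (|r₄ - r₃| * (|r₅ - r₄| * |r₆ - r₄|))) by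
        simpa [abs_sub_comm r₁ r₄, abs_sub_comm r₂ r₄, abs_sub_comm r₃ r₄] using this
      apply lt_prod_five (a₁ := 1.9) (a₂ := 0.99) (a₃ := 0.49) (a₄ := 0.97) (a₅ := 180) <;>
        linarith
    · have e : (Finset.univ.erase (4 : Fin 6)) = {0, 1, 2, 3, 5} := by decide
      change _ < ∏ j ∈ Finset.univ.erase (4 : Fin 6), _
      rw [e]
      suffices 101.83 < |r₅ - r₁| * (|r₅ - r₂| * (|r₅ - r₃| * (|r₅ - r₄| * |r₆ - r₅|))) by
        simpa [abs_sub_comm r₁ r₅, abs_sub_comm r₂ r₅, abs_sub_comm r₃ r₅,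
          abs_sub_comm r₄ r₅] using this
      apply lt_prod_five (a₁ := 2.8) (a₂ := 1.9) (a₃ := 1.4) (a₄ := 0.97) (a₅ := 179) <;>
        linarith
    · have e : (Finset.univ.erase (5 : Fin 6)) = {0, 1, 2, 3, 4} := by decide
      change _ < ∏ j ∈ Finset.univ.erase (5 : Fin 6), _
      rw [e]
      suffices 101.83 < |r₆ - r₁| * (|r₆ - r₂| * (|r₆ - r₃| * (|r₆ - r₄| * |r₆ - r₅|))) by
        simpa [abs_sub_comm r₁ r₆, abs_sub_comm r₂ r₆, abs_sub_comm r₃ r₆,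
          abs_sub_comm r₄ r₆, abs_sub_comm r₅ r₆] using this
      apply lt_prod_five (a₁ := 179) (a₂ := 179) (a₃ := 179) (a₄ := 179) (a₅ := 179) <;>
        linarith
end

section
/- For every integer t with t ≥ −1 and t ∉ {0, 5}, the polynomial f_t^{(6)}(x) = x^6 − 2t x^5 − (5t+15) x^4 − 20 x^3 + 5t x^2 + (2t+6) x + 1 has six distinct real roots α_1, …, α_6, and these roots satisfy min_{i≠j} |α_i − α_j| > 0.4646 and min_i ∏_{j≠i} |α_j − α_i| > 3.3121. -/
/-!
The roots of the simplest sextic form one orbit of the order-six Möbius map `x ↦ (x - 1) / (x + 2)`: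
the binary form `F_t` satisfies `F_t(x - y, x + 2y) = -27 F_t(x, y)`. For `t ≥ -1` the polynomial
is negative at `3.1968` (its value there is decreasing in `t`, so `t = -1` is the extreme case), and
therefore has a root `a > 3.1968`. The six roots are then explicit functions of `a`, namely
`-(2a+1)/(a-1) < -(a+1)/a < -(a+2)/(2a+1) < -1/(a+1) < (a-1)/(a+2) < a`,
and the difference of two of them is a small positive integer times
`(a² + a + 1) / (d_i d_j)`, where `d_i`, `d_j` are their denominators. Hence both bounds become
one-variable inequalities, valid for every `a > 3.1968`. The constants `0.4646` and `3.3121` are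
nearly attained at `t = -1`, where `a = 3.19683…`.
-/

/-- A zero `(x, y)` of the binary sextic form, with `y ≠ 0`, gives the root `x / y` of its
dehomogenization. -/
lemma sextic_root_of_form_zero (t x y : ℝ) (hy : y ≠ 0)
    (h : x ^ 6 - 2 * t * x ^ 5 * y - (5 * t + 15) * x ^ 4 * y ^ 2 - 20 * x ^ 3 * y ^ 3
      + 5 * t * x ^ 2 * y ^ 4 + (2 * t + 6) * x * y ^ 5 + y ^ 6 = 0) :
    (x / y) ^ 6 - 2 * t * (x / y) ^ 5 - (5 * t + 15) * (x / y) ^ 4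
      - 20 * (x / y) ^ 3 + 5 * t * (x / y) ^ 2 + (2 * t + 6) * (x / y) + 1 = 0 := by
  field_simp
  linear_combination h

lemma exists_large_root (t : ℝ) (ht : -1 ≤ t) :
    ∃ a : ℝ, 3.1968 < a ∧ a ^ 6 - 2 * t * a ^ 5 - (5 * t + 15) * a ^ 4
      - 20 * a ^ 3 + 5 * t * a ^ 2 + (2 * t + 6) * a + 1 = 0 := by
  let f : ℝ → ℝ := fun a => a ^ 6 - 2 * t * a ^ 5 - (5 * t + 15) * a ^ 4
      - 20 * a ^ 3 + 5 * t * a ^ 2 + (2 * t + 6) * a + 1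
  have hc : ContinuousOn f (Set.Icc 3.1968 (2 * t + 20)) := by
    apply Continuous.continuousOn
    fun_prop
  have h1 : f 3.1968 < 0 := by
    simp only [f]
    norm_num
    linarith
  have h2 : 0 < f (2 * t + 20) := by
    obtain ⟨s, hs, rfl⟩ : ∃ s : ℝ, 0 ≤ s ∧ t = s - 1 := ⟨t + 1, by linarith, by ring⟩
    simp only [f]
    ring_nf
    positivity
  have hle : (3.1968 : ℝ) ≤ 2 * t + 20 := by norm_num; linarith
  obtain ⟨a, ha, hfa⟩ := intermediate_value_Ioo hle hc ⟨h1, h2⟩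
  exact ⟨a, ha.1, hfa⟩

/-- The smallest of the six products, belonging to the root with denominator `2a + 1`,
after clearing denominators. -/
lemma key_product_bound (a : ℝ) (ha : 3.1968 < a) :
    3.3121 * ((2 * a + 1) ^ 4 * ((a - 1) * a * (2 * a + 1) * (a + 1) * (a + 2)))
      < 18 * (a ^ 2 + a + 1) ^ 5 := by
  obtain ⟨s, hs, rfl⟩ : ∃ s : ℝ, 0 < s ∧ a = s + 3.1968 := ⟨a - 3.1968, by linarith, by ring⟩
  rw [← sub_pos]
  ring_nf
  positivity

/-- The product attached to a root with denominator `d` is `c * (a² + a + 1)⁵ / (d⁴ * D)`, where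
`D` is the product of all denominators; it is compared with the one for `d = 2a + 1`, `c = 18`. -/
lemma product_bound (a c d : ℝ) (ha : 3.1968 < a) (hd : 0 < d)
    (hcd : 18 * d ^ 4 ≤ c * (2 * a + 1) ^ 4) :
    3.3121 < c * (a ^ 2 + a + 1) ^ 5
      / (d ^ 4 * ((a - 1) * a * (2 * a + 1) * (a + 1) * (a + 2))) := by
  have hk := key_product_bound a ha
  have h0 : 0 < a - 1 := by norm_num at ha; linarith
  have h1 : 0 < a := by linarith
  rw [lt_div_iff₀ (by positivity)]
  set D := (a - 1) * a * (2 * a + 1) * (a + 1) * (a + 2) with hD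
  have hDp : 0 < D := by positivity
  have hN : 0 < (a ^ 2 + a + 1) ^ 5 := by positivity
  have e1 : 3.3121 * (d ^ 4 * D) * (2 * a + 1) ^ 4 < c * (a ^ 2 + a + 1) ^ 5 * (2 * a + 1) ^ 4 :=
    calc 3.3121 * (d ^ 4 * D) * (2 * a + 1) ^ 4
        = d ^ 4 * (3.3121 * ((2 * a + 1) ^ 4 * D)) := by ring
      _ < d ^ 4 * (18 * (a ^ 2 + a + 1) ^ 5) := by gcongr
      _ = (18 * d ^ 4) * (a ^ 2 + a + 1) ^ 5 := by ring
      _ ≤ (c * (2 * a + 1) ^ 4) * (a ^ 2 + a + 1) ^ 5 := by gcongr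
      _ = c * (a ^ 2 + a + 1) ^ 5 * (2 * a + 1) ^ 4 := by ring
  exact lt_of_mul_lt_mul_right e1 (by positivity)

/-- The Möbius orbit of `a`, listed in increasing order for `a > 1`; the last entry is written
`a / 1` so that all entries are quotients. -/
noncomputable def orbit (a : ℝ) : Fin 6 → ℝ :=
  ![-(2 * a + 1) / (a - 1), -(a + 1) / a, -(a + 2) / (2 * a + 1), -1 / (a + 1),
    (a - 1) / (a + 2), a / 1]

lemma orbit_root (t a : ℝ) (ha : 3.1968 < a)
    (h : a ^ 6 - 2 * t * a ^ 5 - (5 * t + 15) * a ^ 4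
      - 20 * a ^ 3 + 5 * t * a ^ 2 + (2 * t + 6) * a + 1 = 0) (i : Fin 6) :
    (orbit a i) ^ 6 - 2 * t * (orbit a i) ^ 5 - (5 * t + 15) * (orbit a i) ^ 4
      - 20 * (orbit a i) ^ 3 + 5 * t * (orbit a i) ^ 2 + (2 * t + 6) * (orbit a i) + 1 = 0 := by
  norm_num at ha
  have h0 : 0 < a - 1 := by linarith
  have h1 : 0 < a := by linarith
  fin_cases i <;> simp only [orbit] <;> apply sextic_root_of_form_zero
  · exact h0.ne'
  · linear_combination (-27) * h
  · exact h1.ne'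
  · linear_combination h
  · positivity
  · linear_combination (-27) * h
  · positivity
  · linear_combination h
  · positivity
  · linear_combination (-27) * h
  · norm_num
  · linear_combination h

/-- Only consecutive roots matter, and their difference is exactly
`(a² + a + 1) / (d_i d_j)`; the tight case is the pair `-(a+2)/(2a+1)`, `-1/(a+1)`. -/
lemma orbit_gap (a : ℝ) (ha : 3.1968 < a) (i j : Fin 6) (hij : i < j) :
    0.4646 < orbit a j - orbit a i := by
  have ha' : 3.1968 < a := ha
  norm_num at ha
  have h0 : 0 < a - 1 := by linarith
  have h1 : 0 < a := by linarith
  have g0 : 0.4646 < -(a + 1) / a - -(2 * a + 1) / (a - 1) := by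
    rw [div_sub_div _ _ (by positivity) (by positivity), lt_div_iff₀ (by positivity)]
    nlinarith [mul_pos (sub_pos.2 ha) (sub_pos.2 ha)]
  have g1 : 0.4646 < -(a + 2) / (2 * a + 1) - -(a + 1) / a := by
    rw [div_sub_div _ _ (by positivity) (by positivity), lt_div_iff₀ (by positivity)]
    nlinarith [mul_pos (sub_pos.2 ha) (sub_pos.2 ha)]
  have g2 : 0.4646 < -1 / (a + 1) - -(a + 2) / (2 * a + 1) := by
    rw [div_sub_div _ _ (by positivity) (by positivity), lt_div_iff₀ (by positivity)]
    nlinarith [mul_pos (sub_pos.2 ha) (sub_pos.2 ha)]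
  have g3 : 0.4646 < (a - 1) / (a + 2) - -1 / (a + 1) := by
    rw [div_sub_div _ _ (by positivity) (by positivity), lt_div_iff₀ (by positivity)]
    nlinarith [mul_pos (sub_pos.2 ha) (sub_pos.2 ha)]
  have g4 : 0.4646 < a / 1 - (a - 1) / (a + 2) := by
    rw [div_sub_div _ _ (by positivity) (by positivity), lt_div_iff₀ (by positivity)]
    nlinarith [mul_pos (sub_pos.2 ha) (sub_pos.2 ha)]
  fin_cases i <;> fin_cases j <;> first | exact absurd hij (by decide) | skip
  all_goals
    simp only [orbit, Fin.reduceFinMk, Matrix.cons_val]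
    norm_num at g0 g1 g2 g3 g4 ⊢
    linarith

/-- The root with index `i` has `i` smaller roots, so the signed product of differences has sign
`(-1)^i`; up to that sign it is the quotient of `product_bound` with `c = 18` for even `i` and
`c = 2` for odd `i`. -/
lemma orbit_product (a : ℝ) (ha : 3.1968 < a) (i : Fin 6) :
    3.3121 < ∏ j ∈ Finset.univ.erase i, |orbit a j - orbit a i| := by
  have ha' : 3.1968 < a := ha
  norm_num at ha
  have h0 : 0 < a - 1 := by linarith
  have h1 : 0 < a := by linarith
  have h0' := h0.ne'
  have h1' := h1.ne'
  have h2' : 2 * a + 1 ≠ 0 := by positivity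
  have h3' : a + 1 ≠ 0 := by positivity
  have h4' : a + 2 ≠ 0 := by positivity
  rw [← Finset.abs_prod]
  fin_cases i
  · have hd := pow_le_pow_left₀ (by positivity) (by linarith : (a - 1) ≤ 2 * a + 1) 4
    have hp := product_bound a 18 (a - 1) ha' (by positivity) (by linarith)
    rw [show (Finset.univ.erase (⟨0, by decide⟩ : Fin 6)) = {1, 2, 3, 4, 5} by decide]
    refine lt_abs.2 (Or.inl ?_)
    refine hp.trans_eq ?_
    simp [orbit, Finset.prod_insert]
    field_simp
    ring
  · have hd := pow_le_pow_left₀ (by positivity)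
      (by nlinarith : 3 * a ^ 2 ≤ (2 * a + 1) ^ 2) 2
    have hp := product_bound a 2 a ha' (by positivity) (by linarith)
    rw [show (Finset.univ.erase (⟨1, by decide⟩ : Fin 6)) = {0, 2, 3, 4, 5} by decide]
    refine lt_abs.2 (Or.inr ?_)
    refine hp.trans_eq ?_
    simp [orbit, Finset.prod_insert]
    field_simp
    ring
  · have hd := pow_le_pow_left₀ (by positivity) (by linarith : (2 * a + 1) ≤ 2 * a + 1) 4
    have hp := product_bound a 18 (2 * a + 1) ha' (by positivity) (by linarith)
    rw [show (Finset.univ.erase (⟨2, by decide⟩ : Fin 6)) = {0, 1, 3, 4, 5} by decide]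
    refine lt_abs.2 (Or.inl ?_)
    refine hp.trans_eq ?_
    simp [orbit, Finset.prod_insert]
    field_simp
    ring
  · have hd := pow_le_pow_left₀ (by positivity)
      (by nlinarith : 3 * (a + 1) ^ 2 ≤ (2 * a + 1) ^ 2) 2
    have hp := product_bound a 2 (a + 1) ha' (by positivity) (by linarith)
    rw [show (Finset.univ.erase (⟨3, by decide⟩ : Fin 6)) = {0, 1, 2, 4, 5} by decide]
    refine lt_abs.2 (Or.inr ?_)
    refine hp.trans_eq ?_
    simp [orbit, Finset.prod_insert]
    field_simp
    ring
  · have hd := pow_le_pow_left₀ (by positivity) (by linarith : (a + 2) ≤ 2 * a + 1) 4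
    have hp := product_bound a 18 (a + 2) ha' (by positivity) (by linarith)
    rw [show (Finset.univ.erase (⟨4, by decide⟩ : Fin 6)) = {0, 1, 2, 3, 5} by decide]
    refine lt_abs.2 (Or.inl ?_)
    refine hp.trans_eq ?_
    simp [orbit, Finset.prod_insert]
    field_simp
    ring
  · have hd := pow_le_pow_left₀ (by positivity)
      (by nlinarith : 3 * 1 ^ 2 ≤ (2 * a + 1) ^ 2) 2
    have hp := product_bound a 2 1 ha' (by positivity) (by linarith)
    rw [show (Finset.univ.erase (⟨5, by decide⟩ : Fin 6)) = {0, 1, 2, 3, 4} by decide]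
    refine lt_abs.2 (Or.inr ?_)
    refine hp.trans_eq ?_
    simp [orbit, Finset.prod_insert]
    field_simp
    ring

/-- For `t ≥ -1`, `t ∉ {0, 5}`, the simplest sextic polynomial
`f_t^{(6)}(x) = x^6 - 2t x^5 - (5t+15) x^4 - 20 x^3 + 5t x^2 + (2t+6) x + 1` has six distinct
real roots, whose minimal mutual distance exceeds `0.4646` and such that
`min_i ∏_{j ≠ i} |α_j - α_i| > 3.3121`. -/
theorem simplest_sextic_roots_all_t (t : ℤ) (ht : -1 ≤ t) (ht0 : t ≠ 0) (ht5 : t ≠ 5) :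
    ∃ α : Fin 6 → ℝ, Function.Injective α ∧
      (∀ i, (α i) ^ 6 - 2 * (t : ℝ) * (α i) ^ 5 - (5 * (t : ℝ) + 15) * (α i) ^ 4
          - 20 * (α i) ^ 3 + 5 * (t : ℝ) * (α i) ^ 2 + (2 * (t : ℝ) + 6) * (α i) + 1 = 0) ∧
      (∀ i j, i ≠ j → 0.4646 < |α i - α j|) ∧
      (∀ i, 3.3121 < ∏ j ∈ Finset.univ.erase i, |α j - α i|) := by
  obtain ⟨a, ha, hroot⟩ := exists_large_root (t : ℝ) (by exact_mod_cast ht)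
  have hgap : ∀ i j, i ≠ j → 0.4646 < |orbit a i - orbit a j| := by
    intro i j hij
    rcases lt_or_gt_of_ne hij with h | h
    · rw [abs_sub_comm]
      exact (orbit_gap a ha i j h).trans_le (le_abs_self _)
    · exact (orbit_gap a ha j i h).trans_le (le_abs_self _)
  refine ⟨orbit a, ?_, orbit_root t a ha hroot, hgap, orbit_product a ha⟩
  intro i j h
  by_contra hij
  have := hgap i j hij
  rw [h, sub_self, abs_zero] at this
  norm_num at this
end
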